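/- Let γ > 0, α ∈ (0, 1/γ) and r = 4(1 - sqrt(γα))²/(1 - γα). Then r ∈ (0,4), and the limit of a_k for the recursion t_k = (1 + sqrt(1 + r·t_{k-1}²))/2 with a_k = (t_{k-1}-1)/t_k equals... specifically, with r ∈ (0,4), lim a_k = r/4 = (1 - sqrt(γα))²/(1 - γα) = a★. -/

import Mathlib

theorem adaptive_fista_limit (γ α : ℝ) (hγ : 0 < γ) (hα : α ∈ Set.Ioo 0 (1 / γ))
    (r : ℝ) (hr : r = 4 * (1 - Real.sqrt (γ * α)) ^ 2 / (1 - γ * α))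
    (t a : ℕ → ℝ) (ht0 : t 0 = 1)
    (hrec : ∀ k, t (k + 1) = (1 + Real.sqrt (1 + r * (t k) ^ 2)) / 2)
    (ha : ∀ k, a (k + 1) = (t k - 1) / t (k + 1)) :
    0 < r ∧ r < 4 ∧ Filter.Tendsto a Filter.atTop (nhds (r / 4)) ∧
      r / 4 = (1 - Real.sqrt (γ * α)) ^ 2 / (1 - γ * α) := by
  obtain ⟨hα0, hα1⟩ := hα
  have hp : 0 < γ * α := mul_pos hγ hα0
  have hp1 : γ * α < 1 := by
    rw [lt_div_iff₀ hγ] at hα1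
    linarith
  have hs0 : 0 < Real.sqrt (γ * α) := Real.sqrt_pos.mpr hp
  have hss : Real.sqrt (γ * α) ^ 2 = γ * α := Real.sq_sqrt hp.le
  have hs1 : Real.sqrt (γ * α) < 1 := by nlinarith
  have hr0 : 0 < r := by
    rw [hr]
    have : 0 < 1 - Real.sqrt (γ * α) := by linarith
    have : 0 < 1 - γ * α := by linarith
    positivity
  have hr4 : r < 4 := by
    rw [hr, div_lt_iff₀ (by linarith)]
    nlinarith
  refine ⟨hr0, hr4, ?_, by rw [hr]; ring⟩
  clear hr
  have h4 : 0 < 4 - r := by linarith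
  obtain ⟨T, hT⟩ : ∃ T, T = 4 / (4 - r) := ⟨_, rfl⟩
  have hTe : T * (4 - r) = 4 := by rw [hT]; field_simp
  have hT1 : 1 < T := by rw [hT, lt_div_iff₀ h4]; linarith
  obtain ⟨q, hq⟩ : ∃ q, q = Real.sqrt r := ⟨_, rfl⟩
  have hq0 : 0 < q := by rw [hq]; exact Real.sqrt_pos.mpr hr0
  have hqq : q ^ 2 = r := by rw [hq]; exact Real.sq_sqrt hr0.le
  have hq2 : q < 2 := by nlinarith
  have htpos : ∀ k, 0 < t k := by
    intro k
    cases k with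
    | zero => rw [ht0]; norm_num
    | succ k => rw [hrec]; positivity
  have hstep : ∀ k, |t (k + 1) - T| ≤ (q / 2) * |t k - T| := by
    intro k
    have hx := htpos k
    rw [hrec]
    generalize t k = x at hx
    have hu0 : 0 ≤ Real.sqrt (1 + r * x ^ 2) := Real.sqrt_nonneg _
    have huu : Real.sqrt (1 + r * x ^ 2) ^ 2 = 1 + r * x ^ 2 := Real.sq_sqrt (by positivity)
    generalize Real.sqrt (1 + r * x ^ 2) = u at hu0 huu
    have hux : q * x ≤ u := by
      refine (abs_le_of_sq_le_sq' ?_ hu0).2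
      rw [mul_pow, hqq]; linarith
    have hvv : (2 * T - 1) ^ 2 = 1 + r * T ^ 2 := by linear_combination T * hTe
    have hv : q * T ≤ 2 * T - 1 := by
      refine (abs_le_of_sq_le_sq' ?_ (by linarith)).2
      rw [mul_pow, hqq]; linarith
    have hpos : 0 < u + (2 * T - 1) := by linarith
    have key : |u - (2 * T - 1)| * (u + (2 * T - 1)) = q ^ 2 * (|x - T| * (x + T)) := by
      have e1 : |u - (2 * T - 1)| * (u + (2 * T - 1))
          = |(u - (2 * T - 1)) * (u + (2 * T - 1))| := by
        rw [abs_mul, abs_of_pos hpos]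
      have e2 : |x - T| * (x + T) = |(x - T) * (x + T)| := by
        rw [abs_mul, abs_of_pos (by linarith : 0 < x + T)]
      rw [e1, e2, ← abs_of_pos (by positivity : 0 < q ^ 2), ← abs_mul]
      congr 1
      rw [hqq]
      linear_combination huu - hvv
    have h1 : |u - (2 * T - 1)| ≤ q * |x - T| := by
      refine le_of_mul_le_mul_right ?_ hpos
      rw [key]
      have := mul_le_mul_of_nonneg_left (add_le_add hux hv)
        (by positivity : 0 ≤ q * |x - T|)
      linarith
    have e3 : (1 + u) / 2 - T = (u - (2 * T - 1)) / 2 := by ring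
    rw [e3, abs_div, abs_of_pos (by norm_num : (0:ℝ) < 2)]
    linarith
  have hbound : ∀ k, |t k - T| ≤ (q / 2) ^ k * |t 0 - T| := by
    intro k
    induction k with
    | zero => simp
    | succ k ih =>
      calc _ ≤ _ := hstep k
        _ ≤ (q / 2) * ((q / 2) ^ k * |t 0 - T|) := by gcongr
        _ = _ := by ring
  have hlim : Filter.Tendsto t Filter.atTop (nhds T) := by
    rw [tendsto_iff_dist_tendsto_zero]
    refine squeeze_zero (fun _ => dist_nonneg) hbound ?_
    have := (tendsto_pow_atTop_nhds_zero_of_lt_one (by positivity : 0 ≤ q / 2)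
      (by linarith)).mul_const |t 0 - T|
    simpa using this
  rw [← Filter.tendsto_add_atTop_iff_nat 1]
  have hval : r / 4 = (T - 1) / T := by
    have : T ≠ 0 := by linarith
    field_simp
    linarith
  rw [hval]
  simp only [ha]
  exact (hlim.sub_const 1).div ((Filter.tendsto_add_atTop_iff_nat 1).mpr hlim) (by linarith)
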